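/- Let f₁, f₂ : ℝ → ℝ be of class C^∞ such that for every odd k, f₁^{(k)}(0) = f₂^{(k)}(0) = 0, and for every m ≥ 0, f₁^{(2m)}(0) = (−1)^m·f₂^{(2m)}(0). Define u : ℝ² → ℝ by u(x,y) = f₁(√(x²−y²)) when x² > y², u(x,y) = f₂(√(y²−x²)) when y² > x², and u(x,y) = f₁(0) when x² = y². Then u is of class C^∞ on ℝ². -/

import Mathlib

/-!
The function `u` is `G (x ^ 2 - y ^ 2)`, where `G t` is `f₁ √t` for `t ≥ 0` and `f₂ √(-t)` for
`t < 0`, so it is enough that `G` is smooth. As `f₁' 0 = f₂' 0 = 0`, Hadamard's lemma extends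
`f₁' s / s` and `f₂' s / s` smoothly to `s = 0`, and off the origin `G'` is the gluing of
`f₁' s / (2 s)` and `-f₂' s / (2 s)`. These two profiles satisfy the matching conditions again: the
quotient lowers the index `m` in `(-1) ^ m` by one, and the sign from the chain rule for `√(-t)`
makes up for it. So their gluing is continuous, hence is the derivative of `G` at the origin too,
and one iterates. Each step uses two derivatives of the profiles to gain one derivative of `G`.
-/

open Set Topology

variable {E : Type*} [NormedAddCommGroup E] [NormedSpace ℝ E]

section DilationMoment

/-- The `k`-th moment over `t ∈ [0, 1]` of the dilates `h (s * t)`, as a function of `s`. The case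
`k = 0` is the quotient in Hadamard's lemma; differentiating in `s` raises `k`. -/
noncomputable def dilationMoment (k : ℕ) (h : ℝ → E) (s : ℝ) : E :=
  ∫ t in (0 : ℝ)..1, t ^ k • h (s * t)

theorem dilationMoment_zero_right [CompleteSpace E] (k : ℕ) (h : ℝ → E) :
    dilationMoment k h 0 = (k + 1 : ℝ)⁻¹ • h 0 := by
  simp [dilationMoment, intervalIntegral.integral_smul_const, integral_pow]

theorem continuous_dilationMoment (k : ℕ) {h : ℝ → E} (hh : Continuous h) :
    Continuous (dilationMoment k h) :=
  intervalIntegral.continuous_parametric_intervalIntegral_of_continuous' (by fun_prop) 0 1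

theorem hasDerivAt_dilationMoment (k : ℕ) {h : ℝ → E} (hh : ContDiff ℝ 1 h) (s : ℝ) :
    HasDerivAt (dilationMoment k h) (dilationMoment (k + 1) (deriv h) s) s := by
  obtain ⟨hdiff, hdc⟩ := contDiff_one_iff_deriv.1 hh
  have hc : Continuous h := hh.continuous
  obtain ⟨C, hC⟩ := (isCompact_closedBall (0 : ℝ) (|s| + 1)).exists_bound_of_continuousOn
    hdc.continuousOn
  have hbound : ∀ t ∈ uIoc (0 : ℝ) 1, ∀ x ∈ Metric.ball s 1,
      ‖t ^ (k + 1) • deriv h (x * t)‖ ≤ C := by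
    intro t ht x hx
    rw [uIoc_of_le zero_le_one] at ht
    have hx' : |x| ≤ |s| + 1 := by
      have : |x - s| < 1 := hx
      linarith [abs_sub_abs_le_abs_sub x s]
    have hxt : x * t ∈ Metric.closedBall (0 : ℝ) (|s| + 1) := by
      rw [mem_closedBall_zero_iff, norm_mul, Real.norm_of_nonneg ht.1.le]
      exact (mul_le_of_le_one_right (abs_nonneg x) ht.2).trans hx'
    rw [norm_smul, Real.norm_of_nonneg (pow_nonneg ht.1.le _)]
    exact (mul_le_of_le_one_left (norm_nonneg _) (pow_le_one₀ ht.1.le ht.2)).trans (hC _ hxt)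
  have hderiv : ∀ t x : ℝ,
      HasDerivAt (fun x => t ^ k • h (x * t)) (t ^ (k + 1) • deriv h (x * t)) x := by
    intro t x
    have hdilate : HasDerivAt (fun x => h (x * t)) (t • deriv h (x * t)) x :=
      (hdiff (x * t)).hasDerivAt.scomp x (hasDerivAt_mul_const t)
    exact (hdilate.const_smul (t ^ k)).congr_deriv (by rw [smul_smul, ← pow_succ])
  exact (intervalIntegral.hasDerivAt_integral_of_dominated_loc_of_deriv_le
    (Metric.ball_mem_nhds s one_pos)
    (.of_forall fun x => (by fun_prop : Continuous _).aestronglyMeasurable)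
    ((by fun_prop : Continuous _).intervalIntegrable _ _)
    (by fun_prop : Continuous _).aestronglyMeasurable
    (.of_forall hbound) intervalIntegrable_const (.of_forall fun t _ x _ => hderiv t x)).2

theorem deriv_dilationMoment (k : ℕ) {h : ℝ → E} (hh : ContDiff ℝ 1 h) :
    deriv (dilationMoment k h) = dilationMoment (k + 1) (deriv h) :=
  funext fun s => (hasDerivAt_dilationMoment k hh s).deriv

theorem contDiff_dilationMoment {n : ℕ} (k : ℕ) {h : ℝ → E} (hh : ContDiff ℝ n h) :
    ContDiff ℝ n (dilationMoment k h) := by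
  induction n generalizing k h with
  | zero => exact contDiff_zero.2 (continuous_dilationMoment k hh.continuous)
  | succ n ih =>
    have hh₁ : ContDiff ℝ 1 h := hh.of_le (by simp)
    push_cast at hh ⊢
    rw [contDiff_succ_iff_deriv, deriv_dilationMoment k hh₁]
    exact ⟨fun s => (hasDerivAt_dilationMoment k hh₁ s).differentiableAt, by simp,
      ih (k + 1) (contDiff_succ_iff_deriv.1 hh).2.2⟩

theorem iteratedDeriv_dilationMoment {n : ℕ} (k : ℕ) {h : ℝ → E} (hh : ContDiff ℝ n h) :
    iteratedDeriv n (dilationMoment k h) = dilationMoment (k + n) (iteratedDeriv n h) := by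
  induction n generalizing k h with
  | zero => simp only [iteratedDeriv_zero, add_zero]
  | succ n ih =>
    have hh₁ : ContDiff ℝ 1 h := hh.of_le (by simp)
    push_cast at hh
    rw [iteratedDeriv_succ', deriv_dilationMoment k hh₁, ih _ (contDiff_succ_iff_deriv.1 hh).2.2,
      iteratedDeriv_succ', add_right_comm, add_assoc]

theorem smul_dilationMoment_zero_deriv [CompleteSpace E] {h : ℝ → E} (hh : ContDiff ℝ 1 h) (s : ℝ) :
    s • dilationMoment 0 (deriv h) s = h s - h 0 := by
  obtain ⟨hdiff, hdc⟩ := contDiff_one_iff_deriv.1 hh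
  simp only [dilationMoment, pow_zero, one_smul]
  rw [intervalIntegral.smul_integral_comp_mul_left,
    intervalIntegral.integral_deriv_eq_sub (fun x _ => hdiff x) (hdc.intervalIntegrable _ _),
    mul_one, mul_zero]

end DilationMoment

section DerivDivSelf

/-- The extension of `s ↦ f' s / s` across `s = 0`, for `f' 0 = 0`, given by Hadamard's integral
formula applied to `f'`. -/
noncomputable def derivDivSelf (f : ℝ → E) : ℝ → E := dilationMoment 0 (deriv (deriv f))

variable {f : ℝ → E}

theorem contDiff_deriv_deriv {n : ℕ} (hf : ContDiff ℝ (n + 2 : ℕ) f) :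
    ContDiff ℝ n (deriv (deriv f)) := by
  simpa only [Function.iterate_succ, Function.iterate_zero, Function.comp_apply, id_eq] using
    ContDiff.iterate_deriv' n 2 hf

theorem contDiff_derivDivSelf {n : ℕ} (hf : ContDiff ℝ (n + 2 : ℕ) f) :
    ContDiff ℝ n (derivDivSelf f) :=
  contDiff_dilationMoment 0 (contDiff_deriv_deriv hf)

variable [CompleteSpace E]

theorem iteratedDeriv_derivDivSelf_zero {n : ℕ} (hf : ContDiff ℝ (n + 2 : ℕ) f) :
    iteratedDeriv n (derivDivSelf f) 0 = (n + 1 : ℝ)⁻¹ • iteratedDeriv (n + 2) f 0 := by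
  rw [derivDivSelf, iteratedDeriv_dilationMoment 0 (contDiff_deriv_deriv hf),
    dilationMoment_zero_right, zero_add, iteratedDeriv_succ', iteratedDeriv_succ']

theorem smul_derivDivSelf (hf : ContDiff ℝ 2 f) (hf₀ : deriv f 0 = 0) (s : ℝ) :
    s • derivDivSelf f s = deriv f s := by
  have hf' : ContDiff ℝ 1 (deriv f) := ContDiff.iterate_deriv' 1 1 hf
  rw [derivDivSelf, smul_dilationMoment_zero_deriv hf', hf₀, sub_zero]

theorem hasDerivAt_comp_sqrt (hf : ContDiff ℝ 2 f) (hf₀ : deriv f 0 = 0) {t : ℝ} (ht : 0 < t) :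
    HasDerivAt (fun t => f √t) ((2⁻¹ : ℝ) • derivDivSelf f √t) t := by
  have hchain : HasDerivAt (fun t => f √t) ((1 / (2 * √t)) • deriv f √t) t :=
    (hf.differentiable two_ne_zero √t).hasDerivAt.scomp t (Real.hasDerivAt_sqrt ht.ne')
  have hsqrt : √t ≠ 0 := (Real.sqrt_pos.2 ht).ne'
  convert hchain using 1
  rw [← smul_derivDivSelf hf hf₀, smul_smul]
  congr 1
  field_simp

end DerivDivSelf

section SqrtGlue

/-- The function of the signed squared radius `t` with profile `f` on the side `t ≥ 0` and profile
`g` on the side `t < 0`. -/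
noncomputable def sqrtGlue (f g : ℝ → E) (t : ℝ) : E :=
  if 0 ≤ t then f √t else g √(-t)

/-- The matching conditions of order `n`: `f` and `g` are of class `C^{2n}`, and their Taylor
coefficients at `0` up to order `2n` are those of `a (s ^ 2)` and `a (-s ^ 2)` for a common formal
power series `a`. -/
structure JetMatching (n : ℕ) (f g : ℝ → E) : Prop where
  contDiff_left : ContDiff ℝ (2 * n : ℕ) f
  contDiff_right : ContDiff ℝ (2 * n : ℕ) g
  odd : ∀ k < 2 * n, Odd k → iteratedDeriv k f 0 = 0 ∧ iteratedDeriv k g 0 = 0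
  even : ∀ m ≤ n, iteratedDeriv (2 * m) f 0 = (-1 : ℝ) ^ m • iteratedDeriv (2 * m) g 0

namespace JetMatching

variable {n : ℕ} {f g : ℝ → E}

theorem apply_zero (h : JetMatching n f g) : f 0 = g 0 := by
  simpa using h.even 0 n.zero_le

theorem deriv_zero (h : JetMatching (n + 1) f g) : deriv f 0 = 0 ∧ deriv g 0 = 0 := by
  simpa only [iteratedDeriv_one] using h.odd 1 (by lia) odd_one

theorem continuous_sqrtGlue (h : JetMatching n f g) : Continuous (sqrtGlue f g) := by
  have hf : Continuous f := h.contDiff_left.continuous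
  have hg : Continuous g := h.contDiff_right.continuous
  refine Continuous.if_le (by fun_prop) (by fun_prop) continuous_const continuous_id ?_
  rintro _ rfl
  simpa using h.apply_zero

variable [CompleteSpace E]

theorem const_smul_derivDivSelf (h : JetMatching (n + 1) f g) :
    JetMatching n ((2⁻¹ : ℝ) • derivDivSelf f) (-(2⁻¹ : ℝ) • derivDivSelf g) where
  contDiff_left := contDiff_const.smul (contDiff_derivDivSelf h.contDiff_left)
  contDiff_right := contDiff_const.smul (contDiff_derivDivSelf h.contDiff_right)
  odd k hk hodd := by
    obtain ⟨hf, hg⟩ := h.odd (k + 2) (by lia) (hodd.add_even even_two)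
    rw [iteratedDeriv_const_smul_field, iteratedDeriv_const_smul_field,
      iteratedDeriv_derivDivSelf_zero (h.contDiff_left.of_le (by norm_cast; lia)),
      iteratedDeriv_derivDivSelf_zero (h.contDiff_right.of_le (by norm_cast; lia)), hf, hg]
    simp only [smul_zero, and_self]
  even m hm := by
    have heven := h.even (m + 1) (by lia)
    rw [iteratedDeriv_const_smul_field, iteratedDeriv_const_smul_field,
      iteratedDeriv_derivDivSelf_zero (h.contDiff_left.of_le (by norm_cast; lia)),
      iteratedDeriv_derivDivSelf_zero (h.contDiff_right.of_le (by norm_cast; lia)),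
      ← mul_add_one, heven]
    module

theorem hasDerivAt_sqrtGlue (h : JetMatching (n + 1) f g) (t : ℝ) :
    HasDerivAt (sqrtGlue f g)
      (sqrtGlue ((2⁻¹ : ℝ) • derivDivSelf f) (-(2⁻¹ : ℝ) • derivDivSelf g) t) t := by
  obtain ⟨hf₀, hg₀⟩ := h.deriv_zero
  have hf : ContDiff ℝ 2 f := h.contDiff_left.of_le (by norm_cast; lia)
  have hg : ContDiff ℝ 2 g := h.contDiff_right.of_le (by norm_cast; lia)
  refine hasDerivAt_of_hasDerivAt_of_ne' (x := 0) (fun t ht => ?_)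
    h.continuous_sqrtGlue.continuousAt h.const_smul_derivDivSelf.continuous_sqrtGlue.continuousAt t
  rcases ht.lt_or_gt with hneg | hpos
  · have hglue : sqrtGlue f g =ᶠ[𝓝 t] fun t => g √(-t) := by
      filter_upwards [Iio_mem_nhds hneg] with r hr using if_neg (not_le.2 hr)
    have hderiv := (hasDerivAt_comp_sqrt hg hg₀ (neg_pos.2 hneg)).scomp t (hasDerivAt_neg t)
    refine (hderiv.congr_of_eventuallyEq hglue).congr_deriv ?_
    simp only [sqrtGlue, if_neg (not_le.2 hneg), Pi.smul_apply, neg_smul, one_smul]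
  · have hglue : sqrtGlue f g =ᶠ[𝓝 t] fun t => f √t := by
      filter_upwards [Ioi_mem_nhds hpos] with r hr using if_pos hr.le
    refine ((hasDerivAt_comp_sqrt hf hf₀ hpos).congr_of_eventuallyEq hglue).congr_deriv ?_
    exact (if_pos hpos.le).symm

theorem contDiff_sqrtGlue (h : JetMatching n f g) : ContDiff ℝ n (sqrtGlue f g) := by
  induction n generalizing f g with
  | zero => exact contDiff_zero.2 h.continuous_sqrtGlue
  | succ n ih =>
    push_cast
    rw [contDiff_succ_iff_deriv, funext fun t => (h.hasDerivAt_sqrtGlue t).deriv]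
    exact ⟨fun t => (h.hasDerivAt_sqrtGlue t).differentiableAt, by simp,
      ih h.const_smul_derivDivSelf⟩

end JetMatching

end SqrtGlue

theorem stmt_14_general {F : Type*} [NormedAddCommGroup F] [NormedSpace ℝ F] [CompleteSpace E]
    (n : ℕ∞) (f₁ f₂ : ℝ → E)
    (hf₁ : ContDiff ℝ (2 * n : ℕ∞) f₁) (hf₂ : ContDiff ℝ (2 * n : ℕ∞) f₂)
    (hodd : ∀ k : ℕ, k < 2 * n → Odd k → iteratedDeriv k f₁ 0 = 0 ∧ iteratedDeriv k f₂ 0 = 0)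
    (heven : ∀ m : ℕ, m ≤ n →
      iteratedDeriv (2 * m) f₁ 0 = (-1 : ℝ) ^ m • iteratedDeriv (2 * m) f₂ 0)
    (q : F → ℝ) (hq : ContDiff ℝ n q) (u : F → E)
    (hu₁ : ∀ p, 0 < q p → u p = f₁ √(q p))
    (hu₂ : ∀ p, q p < 0 → u p = f₂ √(-q p))
    (hu₃ : ∀ p, q p = 0 → u p = f₁ 0) :
    ContDiff ℝ n u := by
  have hglue : ContDiff ℝ n (sqrtGlue f₁ f₂) := by
    refine contDiff_iff_forall_nat_le.2 fun m hm => JetMatching.contDiff_sqrtGlue ?_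
    have h2m : ((2 * m : ℕ) : ℕ∞) ≤ 2 * n := by push_cast; gcongr
    exact
      { contDiff_left := hf₁.of_le (WithTop.coe_le_coe.2 h2m)
        contDiff_right := hf₂.of_le (WithTop.coe_le_coe.2 h2m)
        odd := fun k hk => hodd k ((Nat.cast_lt.2 hk).trans_le h2m)
        even := fun j hj => heven j ((Nat.cast_le.2 hj).trans hm) }
  have hu : u = sqrtGlue f₁ f₂ ∘ q := by
    funext p
    rcases lt_trichotomy (q p) 0 with hp | hp | hp
    · simp [sqrtGlue, hu₂ p hp, hp.not_ge]
    · simp [sqrtGlue, hu₃ p hp, hp]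
    · simp [sqrtGlue, hu₁ p hp, hp.le]
  exact hu ▸ hglue.comp hq

/-- The smooth gluing lemma for boost-invariant translating solitons in
Minkowski 3-space: C^∞ profiles with matching derivatives at 0 glue to a C^∞
function on the plane. -/
theorem stmt_14 (f₁ f₂ : ℝ → ℝ)
    (hf₁ : ContDiff ℝ (⊤ : ℕ∞) f₁) (hf₂ : ContDiff ℝ (⊤ : ℕ∞) f₂)
    (hodd : ∀ k : ℕ, Odd k → iteratedDeriv k f₁ 0 = 0 ∧ iteratedDeriv k f₂ 0 = 0)
    (heven : ∀ m : ℕ,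
      iteratedDeriv (2 * m) f₁ 0 = (-1 : ℝ) ^ m * iteratedDeriv (2 * m) f₂ 0)
    (u : ℝ × ℝ → ℝ)
    (hu₁ : ∀ x y : ℝ, y ^ 2 < x ^ 2 → u (x, y) = f₁ (Real.sqrt (x ^ 2 - y ^ 2)))
    (hu₂ : ∀ x y : ℝ, x ^ 2 < y ^ 2 → u (x, y) = f₂ (Real.sqrt (y ^ 2 - x ^ 2)))
    (hu₃ : ∀ x y : ℝ, x ^ 2 = y ^ 2 → u (x, y) = f₁ 0) :
    ContDiff ℝ (⊤ : ℕ∞) u :=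
  stmt_14_general ⊤ f₁ f₂ (hf₁.of_le (by simp)) (hf₂.of_le (by simp)) (fun k _ => hodd k)
    (fun m _ => heven m) (fun p => p.1 ^ 2 - p.2 ^ 2) (by fun_prop) u
    (fun p hp => hu₁ p.1 p.2 (sub_pos.1 hp))
    (fun p hp => by rw [neg_sub]; exact hu₂ p.1 p.2 (sub_neg.1 hp))
    (fun p hp => hu₃ p.1 p.2 (sub_eq_zero.1 hp))
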